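/- Let n, m be positive integers not both equal to 1, and let Θ be a real n×m matrix. If α(Θ) ≤ 1 and α(Θ) < m, then α(ᵗΘ) ≥ (n−1)/(m − α(Θ)); if α(Θ) ≥ 1 and m ≥ 2, then α(ᵗΘ) ≥ (n − α(Θ)^{−1})/(m−1). -/

import Mathlib

open MeasureTheory Filter Matrix

noncomputable section

/-- Geometric mean of the absolute values of the coordinates: Π(z). -/
def Pigeo {k : ℕ} (z : Fin k → ℝ) : ℝ := (∏ i, |z i|) ^ ((1:ℝ)/k)

/-- Geometric mean of `max 1 |z i|`: Π'(z). -/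
def Pigeo' {k : ℕ} (z : Fin k → ℝ) : ℝ := (∏ i, max 1 |z i|) ^ ((1:ℝ)/k)

/-- Coordinatewise cast of an integer vector to a real vector. -/
def ivec {k : ℕ} (x : Fin k → ℤ) : Fin k → ℝ := fun i => (x i : ℝ)

/-- The constant Δ_d = (2^{d-1}√d)⁻¹ · vol_{d-1}{x ∈ [-1,1]^d : x₁+⋯+x_d = 0}. -/
def Delta (d : ℕ) : ℝ :=
  ((2:ℝ) ^ (d - 1) * Real.sqrt d)⁻¹ *
    (μH[(d:ℝ) - 1] {x : EuclideanSpace ℝ (Fin d) | (∀ i, |x i| ≤ 1) ∧ ∑ i, x i = 0}).toReal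

/-- For every sufficiently large t there are x ∈ ℤ^m \ {0}, y ∈ ℤ^n with
Π'(x) ≤ t and Π(Θx − y) ≤ t^{−γ}. -/
def UnifMultApprox (n m : ℕ) (Θ : Matrix (Fin n) (Fin m) ℝ) (γ : ℝ) : Prop :=
  ∀ᶠ t : ℝ in Filter.atTop, ∃ x : Fin m → ℤ, ∃ y : Fin n → ℤ, x ≠ 0 ∧
    Pigeo' (ivec x) ≤ t ∧ Pigeo (Θ.mulVec (ivec x) - ivec y) ≤ t ^ (-γ)

/-- The uniform multiplicative Diophantine exponent α_×(Θ), as an extended real. -/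
def malpha (n m : ℕ) (Θ : Matrix (Fin n) (Fin m) ℝ) : EReal :=
  sSup {x : EReal | ∃ γ : ℝ, x = (γ : EReal) ∧ UnifMultApprox n m Θ γ}

/-- For every sufficiently large t there are x ∈ ℤ^m \ {0}, y ∈ ℤ^n with
|x|_∞ ≤ t and |Θx − y|_∞ ≤ t^{−γ}. -/
def UnifOrdApprox (n m : ℕ) (Θ : Matrix (Fin n) (Fin m) ℝ) (γ : ℝ) : Prop :=
  ∀ᶠ t : ℝ in Filter.atTop, ∃ x : Fin m → ℤ, ∃ y : Fin n → ℤ, x ≠ 0 ∧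
    ‖ivec x‖ ≤ t ∧ ‖Θ.mulVec (ivec x) - ivec y‖ ≤ t ^ (-γ)

/-- The uniform (ordinary) Diophantine exponent α(Θ), as an extended real. -/
def oalpha (n m : ℕ) (Θ : Matrix (Fin n) (Fin m) ℝ) : EReal :=
  sSup {x : EReal | ∃ γ : ℝ, x = (γ : EReal) ∧ UnifOrdApprox n m Θ γ}

/-- Minkowski's linear forms theorem, with strict inequalities. -/
theorem exists_int_ne_zero_abs_mulVec_lt {ι : Type*} [Fintype ι] [DecidableEq ι]
    (N : Matrix ι ι ℝ) (c : ι → ℝ) (hdet : N.det ≠ 0) (hc : ∀ i, 0 < c i)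
    (h : |N.det| < ∏ i, c i) :
    ∃ w : ι → ℤ, w ≠ 0 ∧ ∀ i, |(N *ᵥ fun j => (w j : ℝ)) i| < c i := by
  set b := Pi.basisFun ℝ ι
  set box : Set (ι → ℝ) := Set.univ.pi fun i => Set.Ioo (-c i) (c i)
  have hbox : volume (toLin' N ⁻¹' box) =
      ENNReal.ofReal (|N.det|⁻¹ * ∏ i, (2 * c i)) := by
    rw [Measure.addHaar_preimage_linearMap _ (by rwa [LinearMap.det_toLin']),
      LinearMap.det_toLin', Real.volume_pi_Ioo, abs_inv,
      ENNReal.ofReal_mul (by positivity),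
      ENNReal.ofReal_prod_of_nonneg fun i _ => by have := hc i; positivity]
    simp only [sub_neg_eq_add, two_mul]
  have hF : volume (ZSpan.fundamentalDomain b) = 1 := by
    rw [ZSpan.fundamentalDomain_pi_basisFun]
    simp [Real.volume_pi_Ico]
  have hconv : Convex ℝ (toLin' N ⁻¹' box) :=
    (convex_pi fun i _ => convex_Ioo _ _).linear_preimage _
  have : Countable (Submodule.span ℤ (Set.range b)).toAddSubgroup :=
    inferInstanceAs (Countable (Submodule.span ℤ (Set.range b)))
  have hfund : IsAddFundamentalDomain (Submodule.span ℤ (Set.range b)).toAddSubgroup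
      (ZSpan.fundamentalDomain b) volume := ZSpan.isAddFundamentalDomain b volume
  obtain ⟨⟨x, hxL⟩, hx0, hx⟩ :=
    exists_ne_zero_mem_lattice_of_measure_mul_two_pow_lt_measure hfund
      (s := toLin' N ⁻¹' box) (by
        intro x hx
        simp only [box, Set.mem_preimage, Set.mem_univ_pi, Set.mem_Ioo, map_neg,
          Pi.neg_apply] at hx ⊢
        exact fun i => ⟨by linarith [(hx i).2], by linarith [(hx i).1]⟩) hconv (by
        rw [hF, hbox, one_mul, Module.finrank_fintype_fun_eq_card]
        have h2 : (2 : ENNReal) ^ Fintype.card ι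
            = ENNReal.ofReal ((2 : ℝ) ^ Fintype.card ι) := by
          rw [ENNReal.ofReal_pow (by norm_num)]
          simp
        rw [h2, ENNReal.ofReal_lt_ofReal_iff_of_nonneg (by positivity),
          Finset.prod_mul_distrib, Finset.prod_const, Finset.card_univ]
        have hpos : 0 < |N.det| := abs_pos.2 hdet
        have h1 : 1 < |N.det|⁻¹ * ∏ i, c i := by
          rw [inv_mul_eq_div, one_lt_div hpos]
          exact h
        calc (2 : ℝ) ^ Fintype.card ι = 2 ^ Fintype.card ι * 1 := (mul_one _).symm
          _ < 2 ^ Fintype.card ι * (|N.det|⁻¹ * ∏ i, c i) := by gcongr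
          _ = _ := by ring)
  have hxL' : x ∈ Submodule.span ℤ (Set.range b) := hxL
  rw [Module.Basis.mem_span_iff_repr_mem] at hxL'
  choose w hw using hxL'
  have hwx : (fun j => (w j : ℝ)) = x := by
    ext j
    simpa [b] using hw j
  refine ⟨w, ?_, fun i => ?_⟩
  · rintro rfl
    apply hx0
    ext j
    simp [← hwx]
  · rw [hwx]
    simp only [box, Set.mem_preimage, Set.mem_univ_pi, Set.mem_Ioo, toLin'_apply] at hx
    exact abs_lt.2 (hx i)

theorem det_one_updateRow {ι : Type*} [Fintype ι] [DecidableEq ι] (p : ι → ℝ) (i : ι) :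
    ((1 : Matrix ι ι ℝ).updateRow i p).det = p i := by
  rw [← cramer_transpose_apply, transpose_one, cramer_one]
  rfl

theorem abs_le_of_dotProduct_eq_zero {ι : Type*} [Fintype ι] {p ω : ι → ℝ} {i : ι} {B : ℝ}
    (h : p ⬝ᵥ ω = 0) (hpi : p i ≠ 0) (hp : ∀ k, |p k| ≤ |p i|) (hB : 0 ≤ B)
    (hω : ∀ k, k ≠ i → p k ≠ 0 → |ω k| ≤ B) : |ω i| ≤ Fintype.card ι * B := by
  classical
  have hpos : 0 < |p i| := abs_pos.2 hpi
  rw [dotProduct, ← Finset.add_sum_erase _ _ (Finset.mem_univ i)] at h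
  have h1 : |p i| * |ω i| ≤ |p i| * (Fintype.card ι * B) := by
    rw [← abs_mul, eq_neg_of_add_eq_zero_left h, abs_neg]
    calc _ ≤ ∑ k ∈ Finset.univ.erase i, |p k * ω k| := Finset.abs_sum_le_sum_abs _ _
      _ ≤ ∑ k ∈ Finset.univ.erase i, |p i| * B := by
        refine Finset.sum_le_sum fun k hk => ?_
        rw [abs_mul]
        rcases eq_or_ne (p k) 0 with h0 | h0
        · rw [h0, abs_zero, zero_mul]
          positivity
        · exact mul_le_mul (hp k) (hω k (Finset.ne_of_mem_erase hk) h0) (abs_nonneg _)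
            (abs_nonneg _)
      _ ≤ ∑ k : ι, |p i| * B :=
        Finset.sum_le_sum_of_subset_of_nonneg (Finset.erase_subset _ _)
          fun _ _ _ => by positivity
      _ = _ := by rw [Finset.sum_const, Finset.card_univ, nsmul_eq_mul]; ring
  exact le_of_mul_le_mul_left h1 hpos

theorem exists_ne_zero_forall_abs_le {ι : Type*} [Finite ι] {p : ι → ℝ} (hp : p ≠ 0) :
    ∃ i, p i ≠ 0 ∧ ∀ k, |p k| ≤ |p i| := by
  obtain ⟨j, hj⟩ := Function.ne_iff.1 hp
  have : Nonempty ι := ⟨j⟩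
  obtain ⟨i, hi⟩ := Finite.exists_max fun k => |p k|
  exact ⟨i, abs_pos.1 ((abs_pos.2 hj).trans_le (hi j)), hi⟩

/-- A short vector `p` pairing integrally with the lattice `N ℤ^ι` is orthogonal to a short nonzero
lattice vector. -/
theorem exists_int_abs_mulVec_le_of_one {ι : Type*} [Fintype ι] [DecidableEq ι]
    {N : Matrix ι ι ℝ} (hdet : N.det ≠ 0) {p : ι → ℝ} (hp0 : p ≠ 0)
    (hp : ∀ w : ι → ℤ, ∃ k : ℤ, p ⬝ᵥ (N *ᵥ fun j => (w j : ℝ)) = k)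
    {K : ℝ} (hK : 0 < K) (h : ‖p‖ * |N.det| < K ^ (Fintype.card ι - 1)) :
    ∃ w : ι → ℤ, w ≠ 0 ∧
      ∀ i, |(N *ᵥ fun j => (w j : ℝ)) i| ≤ max K (Fintype.card ι * K) := by
  obtain ⟨i, hpi, hi⟩ := exists_ne_zero_forall_abs_le hp0
  set M := (1 : Matrix ι ι ℝ).updateRow i p * N
  have hM : M.det = p i * N.det := by rw [det_mul, det_one_updateRow]
  have hMw : ∀ v, M *ᵥ v = Function.update (N *ᵥ v) i (p ⬝ᵥ (N *ᵥ v)) := fun v => by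
    rw [← mulVec_mulVec, updateRow_mulVec, one_mulVec]
  obtain ⟨w, hw0, hw⟩ := exists_int_ne_zero_abs_mulVec_lt M
    (Function.update (fun _ => K) i 1) (by rw [hM]; exact mul_ne_zero hpi hdet)
    (by
      intro k
      rcases eq_or_ne k i with rfl | hk
      · simp
      · simpa [hk] using hK)
    (by
      rw [hM, abs_mul, Finset.prod_update_of_mem (Finset.mem_univ i), Finset.prod_const,
        Finset.card_sdiff_of_subset (Finset.subset_univ _), Finset.card_univ,
        Finset.card_singleton, one_mul]
      refine lt_of_le_of_lt ?_ h
      gcongr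
      exact norm_le_pi_norm p i)
  rw [hMw] at hw
  refine ⟨w, hw0, ?_⟩
  have hlt : ∀ k, k ≠ i → |(N *ᵥ fun j => (w j : ℝ)) k| < K := fun k hk => by
    simpa [hk] using hw k
  have hzero : p ⬝ᵥ (N *ᵥ fun j => (w j : ℝ)) = 0 := by
    obtain ⟨k, hk⟩ := hp w
    have := hw i
    simp only [Function.update_self, hk] at this
    rw [hk, Int.cast_eq_zero, ← Int.abs_lt_one_iff]
    exact_mod_cast this
  intro k
  rcases eq_or_ne k i with rfl | hk
  · exact (abs_le_of_dotProduct_eq_zero hzero hpi hi hK.le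
      fun k hk _ => (hlt k hk).le).trans (le_max_right _ _)
  · exact (hlt k hk).le.trans (le_max_left _ _)

/-- Two independent vectors pairing integrally with the lattice `N ℤ^ι`, with small product of
norms, are orthogonal to a common short nonzero lattice vector. -/
theorem exists_int_abs_mulVec_le_of_two {ι : Type*} [Fintype ι] [DecidableEq ι]
    {N : Matrix ι ι ℝ} (hdet : N.det ≠ 0) {p q : ι → ℝ} (hp0 : p ≠ 0)
    (hq0 : ∀ c : ℝ, q ≠ c • p)
    (hp : ∀ w : ι → ℤ, ∃ k : ℤ, p ⬝ᵥ (N *ᵥ fun j => (w j : ℝ)) = k)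
    (hq : ∀ w : ι → ℤ, ∃ k : ℤ, q ⬝ᵥ (N *ᵥ fun j => (w j : ℝ)) = k)
    {K : ℝ} (hK : 0 < K) (h : ‖p‖ * (2 * ‖q‖) * |N.det| < K ^ (Fintype.card ι - 2)) :
    ∃ w : ι → ℤ, w ≠ 0 ∧ ∀ i, |(N *ᵥ fun j => (w j : ℝ)) i| ≤
      max K (max (Fintype.card ι * K) (Fintype.card ι * max K (Fintype.card ι * K))) := by
  obtain ⟨i, hpi, hi⟩ := exists_ne_zero_forall_abs_le hp0
  have hpos : 0 < |p i| := abs_pos.2 hpi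
  set c := q i / p i
  set q' := q - c • p with hq'
  have hqi : q' i = 0 := by simp [hq', c, hpi]
  have hq'0 : q' ≠ 0 := fun h0 => hq0 c (sub_eq_zero.1 h0)
  obtain ⟨j, hqj, hj⟩ := exists_ne_zero_forall_abs_le hq'0
  have hji : j ≠ i := by
    rintro rfl
    exact hqj hqi
  have hq'j : |q' j| ≤ 2 * ‖q‖ := by
    have h1 : |c * p j| ≤ ‖q‖ := by
      rw [abs_mul, abs_div, div_mul_eq_mul_div, div_le_iff₀ hpos]
      exact mul_le_mul (norm_le_pi_norm q i) (hi j) (abs_nonneg _) (norm_nonneg _)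
    have h2 : |q j| ≤ ‖q‖ := norm_le_pi_norm q j
    calc |q' j| = |q j - c * p j| := by simp [hq']
      _ ≤ |q j| + |c * p j| := abs_sub _ _
      _ ≤ _ := by linarith
  set M := (1 : Matrix ι ι ℝ).updateRow j (q' + c • Pi.single i 1) *
    ((1 : Matrix ι ι ℝ).updateRow i p * N)
  have hM : M.det = q' j * (p i * N.det) := by
    rw [det_mul, det_mul, det_one_updateRow, det_one_updateRow]
    simp [hji]
  have hMw : ∀ v, M *ᵥ v = Function.update (Function.update (N *ᵥ v) i (p ⬝ᵥ (N *ᵥ v))) j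
      (q ⬝ᵥ (N *ᵥ v)) := fun v => by
    have hdot : ∀ s, q' ⬝ᵥ Function.update (N *ᵥ v) i s = q' ⬝ᵥ (N *ᵥ v) := fun s => by
      refine Finset.sum_congr rfl fun k _ => ?_
      rcases eq_or_ne k i with rfl | hk
      · simp [hqi]
      · simp [hk]
    rw [← mulVec_mulVec, ← mulVec_mulVec, updateRow_mulVec, updateRow_mulVec, one_mulVec,
      one_mulVec, add_dotProduct, hdot, smul_dotProduct, single_dotProduct,
      Function.update_self, one_mul, ← smul_dotProduct, ← add_dotProduct, hq',
      sub_add_cancel]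
  obtain ⟨w, hw0, hw⟩ := exists_int_ne_zero_abs_mulVec_lt M
    (Function.update (Function.update (fun _ => K) i 1) j 1)
    (by rw [hM]; exact mul_ne_zero hqj (mul_ne_zero hpi hdet))
    (by
      intro k
      rcases eq_or_ne k j with rfl | hk
      · simp
      rcases eq_or_ne k i with rfl | hk'
      · simp [hk]
      · simpa [hk, hk'] using hK)
    (by
      rw [hM, abs_mul, abs_mul, Finset.prod_update_of_mem (Finset.mem_univ j),
        Finset.prod_update_of_mem (by simpa using hji.symm), Finset.prod_const,
        Finset.card_sdiff_of_subset (by simpa using hji.symm),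
        Finset.card_sdiff_of_subset (Finset.subset_univ _), Finset.card_univ,
        Finset.card_singleton, Finset.card_singleton, one_mul, one_mul, Nat.sub_sub]
      refine lt_of_le_of_lt ?_ h
      have : |p i| ≤ ‖p‖ := norm_le_pi_norm p i
      calc |q' j| * (|p i| * |N.det|) = |p i| * |q' j| * |N.det| := by ring
        _ ≤ _ := by gcongr)
  rw [hMw] at hw
  refine ⟨w, hw0, ?_⟩
  set ω := N *ᵥ fun j => (w j : ℝ) with hω
  have hlt : ∀ k, k ≠ j → k ≠ i → |ω k| < K := fun k hk hk' => by
    simpa [hk, hk'] using hw k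
  have hzero : p ⬝ᵥ ω = 0 := by
    obtain ⟨k, hk⟩ := hp w
    have := hw i
    change p ⬝ᵥ ω = k at hk
    simp only [Function.update_of_ne hji.symm, Function.update_self] at this
    rw [hk] at this ⊢
    rw [Int.cast_eq_zero, ← Int.abs_lt_one_iff]
    exact_mod_cast this
  have hzero' : q' ⬝ᵥ ω = 0 := by
    have hqz : q ⬝ᵥ ω = 0 := by
      obtain ⟨k, hk⟩ := hq w
      have := hw j
      change q ⬝ᵥ ω = k at hk
      simp only [Function.update_self] at this
      rw [hk] at this ⊢
      rw [Int.cast_eq_zero, ← Int.abs_lt_one_iff]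
      exact_mod_cast this
    rw [hq', sub_dotProduct, smul_dotProduct, hzero, hqz, smul_zero, sub_zero]
  have hωj : |ω j| ≤ Fintype.card ι * K :=
    abs_le_of_dotProduct_eq_zero hzero' hqj hj hK.le fun k hk hk' =>
      (hlt k hk fun hki => hk' (hki ▸ hqi)).le
  have hne : ∀ k, k ≠ i → |ω k| ≤ max K (Fintype.card ι * K) := fun k hk => by
    rcases eq_or_ne k j with rfl | hkj
    · exact hωj.trans (le_max_right _ _)
    · exact (hlt k hkj hk).le.trans (le_max_left _ _)
  intro k
  rcases eq_or_ne k i with rfl | hk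
  · exact (abs_le_of_dotProduct_eq_zero hzero hpi hi (hK.le.trans (le_max_left _ _))
      fun k hk _ => hne k hk).trans ((le_max_right _ _).trans (le_max_right _ _))
  · refine (hne k hk).trans (max_le_max_left _ (le_max_left _ _))

/-- A set meeting all boxes with a corner on a hyperbola contains a short vector, or two independent
vectors with small product of norms. -/
theorem exists_norm_mul_norm_le_of_hyperbola {E F : Type*} [NormedAddCommGroup E]
    [NormedSpace ℝ E] [NormedAddCommGroup F] [NormedSpace ℝ F] {S : Set (E × F)} {ε : ℝ}
    (hε : 0 < ε) (hε1 : ε ≤ 1)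
    (H : ∀ a, ε ≤ a → a ≤ 1 → ∃ p ∈ S, ‖p.1‖ ≤ a ∧ ‖p.2‖ ≤ ε / a) :
    (∃ p ∈ S, ‖p‖ ≤ 2 * ε) ∨
      ∃ p ∈ S, ∃ q ∈ S, ‖p‖ * ‖q‖ ≤ 4 * ε ∧ ∀ c : ℝ, q ≠ c • p := by
  rw [or_iff_not_imp_left]
  intro hno
  push Not at hno
  set L := (fun p => ‖p‖) '' S
  have hbdd : BddBelow L := ⟨0, by rintro _ ⟨p, -, rfl⟩; exact norm_nonneg p⟩
  obtain ⟨p₀, hp₀, hp₀1, hp₀2⟩ := H 1 hε1 le_rfl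
  have hne : L.Nonempty := ⟨_, p₀, hp₀, rfl⟩
  set l := sInf L
  have hmin : ∀ p ∈ S, l ≤ ‖p‖ := fun p hp => csInf_le hbdd ⟨p, hp, rfl⟩
  have hl : 2 * ε ≤ l := le_csInf hne (by rintro _ ⟨p, hp, rfl⟩; exact (hno p hp).le)
  have hl1 : l ≤ 1 := (hmin p₀ hp₀).trans (by
    rw [Prod.norm_def]
    exact max_le hp₀1 (hp₀2.trans (by simpa using hε1)))
  have hl0 : 0 < l := by linarith
  obtain ⟨_, ⟨p, hp, rfl⟩, hpl⟩ := exists_lt_of_csInf_lt hne (show l < 2 * l by linarith)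
  have hbound : ∀ q : E × F, ‖q‖ ≤ 2 * ε / l → ‖p‖ * ‖q‖ ≤ 4 * ε := fun q hq => by
    calc ‖p‖ * ‖q‖ ≤ (2 * l) * (2 * ε / l) := by gcongr
      _ = 4 * ε := by field_simp; norm_num
  rcases le_total ‖p.1‖ ‖p.2‖ with hAB | hAB
  · obtain ⟨q, hq, hq1, hq2⟩ := H (2 * ε / l) (by rw [le_div_iff₀ hl0]; nlinarith)
      (by rwa [div_le_one hl0])
    have hq2' : ‖q.2‖ ≤ l / 2 := hq2.trans_eq (by field_simp)
    refine ⟨p, hp, q, hq, hbound q ?_, ?_⟩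
    · rcases le_total ‖q.1‖ ‖q.2‖ with h | h
      · have := hmin q hq
        rw [Prod.norm_def, max_eq_right h] at this
        linarith
      · rwa [Prod.norm_def, max_eq_left h]
    · rintro c rfl
      have := hmin _ hq
      rw [norm_smul, Prod.norm_def, max_eq_right hAB, ← norm_smul, ← Prod.smul_snd] at this
      linarith
  · obtain ⟨q, hq, hq1, hq2⟩ := H (l / 2) (by linarith) (by linarith)
    have hq2' : ‖q.2‖ ≤ 2 * ε / l := hq2.trans_eq (by field_simp)
    refine ⟨p, hp, q, hq, hbound q ?_, ?_⟩
    · rcases le_total ‖q.1‖ ‖q.2‖ with h | h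
      · rwa [Prod.norm_def, max_eq_right h]
      · have := hmin q hq
        rw [Prod.norm_def, max_eq_left h] at this
        linarith
    · rintro c rfl
      have := hmin _ hq
      rw [norm_smul, Prod.norm_def, max_eq_left hAB, ← norm_smul, ← Prod.smul_fst] at this
      linarith

theorem norm_sumElim {α β : Type*} [Fintype α] [Fintype β] (p : (α → ℝ) × (β → ℝ)) :
    ‖(Sum.elim p.1 p.2 : α ⊕ β → ℝ)‖ = ‖p‖ := by
  refine le_antisymm ((pi_norm_le_iff_of_nonneg (norm_nonneg p)).2 ?_) (max_le ?_ ?_)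
  · rintro (i | i)
    · exact (norm_le_pi_norm p.1 i).trans (norm_fst_le p)
    · exact (norm_le_pi_norm p.2 i).trans (norm_snd_le p)
  · exact (pi_norm_le_iff_of_nonneg (norm_nonneg _)).2 fun i =>
      norm_le_pi_norm (Sum.elim p.1 p.2 : α ⊕ β → ℝ) (Sum.inl i)
  · exact (pi_norm_le_iff_of_nonneg (norm_nonneg _)).2 fun i =>
      norm_le_pi_norm (Sum.elim p.1 p.2 : α ⊕ β → ℝ) (Sum.inr i)

/-- Transference: if every box `V‖x‖ ≤ a`, `Y‖Θx - y‖ ≤ V^m Y^n / a` contains an integer point, then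
`Θᵀ` has an integer approximation `(v, u)` of size `(Y, V)` up to a constant. -/
theorem exists_transpose_approx {n m : ℕ} (hd : 3 ≤ m + n) (Θ : Matrix (Fin n) (Fin m) ℝ)
    {V Y : ℝ} (hV : 0 < V) (hY : 0 < Y)
    (H : V ^ m * Y ^ n ≤ 1 → ∀ a, V ^ m * Y ^ n ≤ a → a ≤ 1 →
      ∃ x : Fin m → ℤ, ∃ y : Fin n → ℤ, x ≠ 0 ∧ V * ‖ivec x‖ ≤ a ∧
        Y * ‖Θ *ᵥ ivec x - ivec y‖ ≤ V ^ m * Y ^ n / a) :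
    ∃ v : Fin n → ℤ, ∃ u : Fin m → ℤ, (v = 0 → u ≠ 0) ∧
      ‖ivec v‖ ≤ 9 * (m + n) ^ 2 * Y ∧
      ‖Θᵀ *ᵥ ivec v - ivec u‖ ≤ 9 * (m + n) ^ 2 * V := by
  set ε := V ^ m * Y ^ n with hε_def
  have hε : 0 < ε := by positivity
  have hd' : (3 : ℝ) ≤ m + n := by exact_mod_cast hd
  set N : Matrix (Fin m ⊕ Fin n) (Fin m ⊕ Fin n) ℝ :=
    fromBlocks (V⁻¹ • 1) (V⁻¹ • Θᵀ) 0 (Y⁻¹ • 1)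
  have hNdet : N.det = ε⁻¹ := by
    rw [det_fromBlocks_zero₂₁, det_smul, det_smul]
    simp [hε_def, mul_comm]
  have hdet : N.det ≠ 0 := by
    rw [hNdet]
    positivity
  have hN : ∀ w : Fin m ⊕ Fin n → ℤ, (N *ᵥ fun j => (w j : ℝ)) =
      Sum.elim (V⁻¹ • (ivec (w ∘ Sum.inl) + Θᵀ *ᵥ ivec (w ∘ Sum.inr)))
        (Y⁻¹ • ivec (w ∘ Sum.inr)) := fun w => by
    rw [fromBlocks_mulVec, zero_mulVec, zero_add, smul_mulVec, smul_mulVec, smul_mulVec,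
      one_mulVec, one_mulVec, ← smul_add]
    rfl
  suffices h : ∃ w : Fin m ⊕ Fin n → ℤ, w ≠ 0 ∧
      ∀ i, |(N *ᵥ fun j => (w j : ℝ)) i| ≤ 9 * (m + n) ^ 2 by
    obtain ⟨w, hw0, hw⟩ := h
    refine ⟨w ∘ Sum.inr, -(w ∘ Sum.inl), fun hv hu => hw0 ?_, ?_, ?_⟩
    · ext (i | i)
      · simpa using congrFun hu i
      · exact congrFun hv i
    · refine (pi_norm_le_iff_of_nonneg (by positivity)).2 fun i => ?_
      have := hw (Sum.inr i)
      rw [hN, Sum.elim_inr, Pi.smul_apply, smul_eq_mul, abs_mul, abs_inv, abs_of_pos hY,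
        inv_mul_le_iff₀ hY] at this
      rw [Real.norm_eq_abs]
      linarith
    · refine (pi_norm_le_iff_of_nonneg (by positivity)).2 fun i => ?_
      have := hw (Sum.inl i)
      rw [hN, Sum.elim_inl, Pi.smul_apply, smul_eq_mul, abs_mul, abs_inv, abs_of_pos hV,
        inv_mul_le_iff₀ hV] at this
      rw [Real.norm_eq_abs]
      have he : (Θᵀ *ᵥ ivec (w ∘ Sum.inr) - ivec (-(w ∘ Sum.inl))) i =
          (ivec (w ∘ Sum.inl) + Θᵀ *ᵥ ivec (w ∘ Sum.inr)) i := by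
        simp [ivec, add_comm]
      rw [he]
      linarith
  rcases lt_or_ge 1 ε with hε1 | hε1
  · obtain ⟨w, hw0, hw⟩ := exists_int_ne_zero_abs_mulVec_lt N (fun _ => 1) hdet
      (fun _ => one_pos) (by
        rw [hNdet, abs_of_pos (by positivity), Finset.prod_const_one]
        exact inv_lt_one_of_one_lt₀ hε1)
    exact ⟨w, hw0, fun i => (hw i).le.trans (by nlinarith)⟩
  set S : Set ((Fin m → ℝ) × (Fin n → ℝ)) :=
    {p | ∃ x : Fin m → ℤ, ∃ y : Fin n → ℤ, x ≠ 0 ∧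
      p = (V • ivec x, Y • (ivec y - Θ *ᵥ ivec x))}
  have hS0 : ∀ p ∈ S, (Sum.elim p.1 p.2 : Fin m ⊕ Fin n → ℝ) ≠ 0 := by
    rintro _ ⟨x, y, hx, rfl⟩ h0
    apply hx
    ext i
    simpa [ivec, hV.ne'] using congrFun h0 (Sum.inl i)
  have hSint : ∀ p ∈ S, ∀ w : Fin m ⊕ Fin n → ℤ, ∃ k : ℤ,
      (Sum.elim p.1 p.2 : Fin m ⊕ Fin n → ℝ) ⬝ᵥ (N *ᵥ fun j => (w j : ℝ)) = k := by
    rintro _ ⟨x, y, -, rfl⟩ w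
    refine ⟨x ⬝ᵥ (w ∘ Sum.inl) + y ⬝ᵥ (w ∘ Sum.inr), ?_⟩
    have hcast : ∀ {k : ℕ} (a b : Fin k → ℤ), ((a ⬝ᵥ b : ℤ) : ℝ) = ivec a ⬝ᵥ ivec b :=
      fun a b => by simp [dotProduct, ivec]
    rw [hN, sumElim_dotProduct_sumElim, smul_dotProduct, dotProduct_smul, smul_dotProduct,
      dotProduct_smul, smul_inv_smul₀ hV.ne', smul_inv_smul₀ hY.ne', dotProduct_add,
      sub_dotProduct, Int.cast_add, hcast, hcast, mulVec_transpose,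
      dotProduct_comm (ivec x) (_ ᵥ* Θ), ← dotProduct_mulVec,
      dotProduct_comm (Θ *ᵥ ivec x)]
    ring
  have hcard : Fintype.card (Fin m ⊕ Fin n) = m + n := by simp
  have h9 : ∀ k : ℕ, 1 ≤ k → (9 : ℝ) ≤ 9 ^ k := fun k hk => by
    simpa using pow_le_pow_right₀ (show (1 : ℝ) ≤ 9 by norm_num) hk
  rcases exists_norm_mul_norm_le_of_hyperbola (S := S) hε hε1 (fun a ha ha1 => by
    obtain ⟨x, y, hx, h1, h2⟩ := H hε1 a ha ha1
    refine ⟨_, ⟨x, y, hx, rfl⟩, ?_, ?_⟩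
    · rwa [norm_smul, Real.norm_of_nonneg hV.le]
    · rwa [norm_smul, Real.norm_of_nonneg hY.le, norm_sub_rev]) with
    ⟨p, hp, hpε⟩ | ⟨p, hp, q, hq, hpq, hind⟩
  · obtain ⟨w, hw0, hw⟩ := exists_int_abs_mulVec_le_of_one hdet (hS0 p hp) (hSint p hp)
      (K := 9) (by norm_num) (by
        rw [norm_sumElim, hNdet, abs_of_pos (by positivity), hcard]
        refine lt_of_le_of_lt ?_ ((show (2 : ℝ) < 9 by norm_num).trans_le (h9 _ (by omega)))
        rwa [mul_inv_le_iff₀ hε])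
    refine ⟨w, hw0, fun i => (hw i).trans ?_⟩
    rw [hcard, Nat.cast_add]
    exact max_le (by nlinarith) (by nlinarith)
  · obtain ⟨w, hw0, hw⟩ := exists_int_abs_mulVec_le_of_two hdet (hS0 p hp)
      (q := Sum.elim q.1 q.2) (fun c hc => hind c (by
        refine Prod.ext (funext fun i => ?_) (funext fun i => ?_)
        · exact congrFun hc (Sum.inl i)
        · exact congrFun hc (Sum.inr i))) (hSint p hp) (hSint q hq)
      (K := 9) (by norm_num) (by
        rw [norm_sumElim, norm_sumElim, hNdet, abs_of_pos (by positivity), hcard]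
        refine lt_of_le_of_lt ?_ ((show (8 : ℝ) < 9 by norm_num).trans_le (h9 _ (by omega)))
        rw [mul_inv_le_iff₀ hε]
        linarith)
    refine ⟨w, hw0, fun i => (hw i).trans ?_⟩
    rw [hcard, Nat.cast_add, max_eq_right (show (9 : ℝ) ≤ (m + n) * 9 by linarith)]
    exact max_le (by nlinarith) (max_le (by nlinarith) (by nlinarith))

theorem UnifOrdApprox.mono {n m : ℕ} {Θ : Matrix (Fin n) (Fin m) ℝ} {γ γ' : ℝ}
    (h : UnifOrdApprox n m Θ γ) (hγ : γ' ≤ γ) : UnifOrdApprox n m Θ γ' := by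
  filter_upwards [h, eventually_ge_atTop 1] with t ⟨x, y, hx, h1, h2⟩ ht
  exact ⟨x, y, hx, h1, h2.trans (Real.rpow_le_rpow_of_exponent_le ht (neg_le_neg hγ))⟩

theorem unifOrdApprox_of_lt_oalpha {n m : ℕ} {Θ : Matrix (Fin n) (Fin m) ℝ} {γ : ℝ}
    (h : (γ : EReal) < oalpha n m Θ) : UnifOrdApprox n m Θ γ := by
  obtain ⟨_, ⟨γ', rfl, h'⟩, hlt⟩ := lt_sSup_iff.1 h
  exact h'.mono (EReal.coe_lt_coe_iff.1 hlt).le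

theorem UnifOrdApprox.le_oalpha {n m : ℕ} {Θ : Matrix (Fin n) (Fin m) ℝ} {γ : ℝ}
    (h : UnifOrdApprox n m Θ γ) : (γ : EReal) ≤ oalpha n m Θ :=
  le_sSup ⟨γ, rfl, h⟩

theorem unifOrdApprox_zero {n m : ℕ} (hm : 0 < m) (Θ : Matrix (Fin n) (Fin m) ℝ) :
    UnifOrdApprox n m Θ 0 := by
  filter_upwards [eventually_ge_atTop 1] with t ht
  refine ⟨Pi.single ⟨0, hm⟩ 1, fun i => round ((Θ *ᵥ ivec (Pi.single ⟨0, hm⟩ 1)) i), ?_, ?_, ?_⟩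
  · simp
  · refine (pi_norm_le_iff_of_nonneg (by linarith)).2 fun i => ?_
    rcases eq_or_ne i ⟨0, hm⟩ with rfl | hi
    · simpa [ivec] using ht
    · simp only [ivec, Pi.single_eq_of_ne hi, Int.cast_zero, norm_zero]
      linarith
  · rw [neg_zero, Real.rpow_zero]
    refine (pi_norm_le_iff_of_nonneg zero_le_one).2 fun i => ?_
    exact (abs_sub_round _).trans (by norm_num)

theorem le_oalpha_of_forall_lt {n m : ℕ} (hm : 0 < m) {Θ : Matrix (Fin n) (Fin m) ℝ} {b : ℝ}
    (h : ∀ c, 0 < c → c < b → UnifOrdApprox n m Θ c) : (b : EReal) ≤ oalpha n m Θ := by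
  refine EReal.ge_of_forall_gt_iff_ge.1 fun c hc => ?_
  rcases lt_or_ge 0 c with h0 | h0
  · exact (h c h0 (EReal.coe_lt_coe_iff.1 hc)).le_oalpha
  · exact ((unifOrdApprox_zero hm Θ).mono h0).le_oalpha

theorem UnifOrdApprox.transpose {n m : ℕ} (hd : 3 ≤ m + n) {Θ : Matrix (Fin n) (Fin m) ℝ}
    {α β c τ : ℝ} (h : UnifOrdApprox n m Θ α) (hc : 0 < c) (hcβ : c < β) (hτ : 0 < τ)
    (H : ∀ Y : ℝ, 1 ≤ Y → ∀ a, Y ^ (n - m * β) ≤ a → a ≤ 1 →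
      Y ^ τ ≤ a * Y ^ β ∧ Y * (a * Y ^ β) ^ (-α) ≤ Y ^ (n - m * β) / a) :
    UnifOrdApprox m n Θᵀ c := by
  set C : ℝ := 9 * (m + n) ^ 2
  have hC : 0 < C := by
    have : (3 : ℝ) ≤ m + n := by exact_mod_cast hd
    positivity
  obtain ⟨t₀, ht₀⟩ := eventually_atTop.1 h
  have hY : Tendsto (fun t : ℝ => t / C) atTop atTop := tendsto_id.atTop_div_const hC
  have hpow := (tendsto_rpow_atTop (sub_pos.2 hcβ)).eventually_ge_atTop (C * C ^ β)
  filter_upwards [eventually_gt_atTop 1, hY.eventually_ge_atTop 1,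
    hY.eventually ((tendsto_rpow_atTop hτ).eventually_ge_atTop t₀), hpow]
    with t ht1 hY1 hYτ htβ
  set Y := t / C
  have hY0 : 0 < Y := by linarith
  have ht0 : 0 < t := by linarith
  have hε : (Y ^ (-β)) ^ m * Y ^ n = Y ^ (n - m * β) := by
    rw [← Real.rpow_natCast, ← Real.rpow_natCast, ← Real.rpow_mul hY0.le,
      ← Real.rpow_add hY0]
    ring_nf
  have hVpos : 0 < Y ^ (-β) := by positivity
  have hVinv : (Y ^ (-β))⁻¹ = Y ^ β := by rw [Real.rpow_neg hY0.le, inv_inv]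
  obtain ⟨v, u, hvu, hv, hu⟩ := exists_transpose_approx hd Θ hVpos hY0 (by
    rw [hε]
    intro _ a ha ha1
    obtain ⟨h1, h2⟩ := H Y hY1 a ha ha1
    obtain ⟨x, y, hx, hx1, hx2⟩ := ht₀ _ (hYτ.trans h1)
    refine ⟨x, y, hx, ?_, (mul_le_mul_of_nonneg_left hx2 hY0.le).trans h2⟩
    rw [← hVinv, ← div_eq_mul_inv, le_div_iff₀ hVpos] at hx1
    linarith)
  have hV : C * Y ^ (-β) ≤ t ^ (-c) := by
    have h1 : Y ^ (-β) = C ^ β * t ^ (-β) := by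
      rw [Real.div_rpow ht0.le hC.le, Real.rpow_neg hC.le, div_inv_eq_mul, mul_comm]
    calc C * Y ^ (-β) = C * C ^ β * t ^ (-β) := by rw [h1]; ring
      _ ≤ t ^ (β - c) * t ^ (-β) := by gcongr
      _ = t ^ (-c) := by rw [← Real.rpow_add ht0]; ring_nf
  refine ⟨v, u, ?_, ?_, hu.trans hV⟩
  · rintro rfl
    obtain ⟨i, hi⟩ := Function.ne_iff.1 (hvu rfl)
    have h1 := (norm_le_pi_norm _ i).trans (hu.trans hV)
    have h2 : t ^ (-c) < 1 := Real.rpow_lt_one_of_one_lt_of_neg ht1 (neg_lt_zero.2 hc)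
    have h3 : (1 : ℝ) ≤ |(u i : ℝ)| := by exact_mod_cast Int.one_le_abs hi
    have h0 : ivec (0 : Fin n → ℤ) = 0 := by ext; simp [ivec]
    rw [h0, mulVec_zero, zero_sub, Pi.neg_apply, norm_neg, Real.norm_eq_abs] at h1
    simp only [ivec] at h1
    linarith
  · exact hv.trans_eq (mul_div_cancel₀ t hC.ne')

theorem UnifOrdApprox.transpose_of_le_one {n m : ℕ} (hd : 3 ≤ m + n)
    {Θ : Matrix (Fin n) (Fin m) ℝ} {α c : ℝ} (h : UnifOrdApprox n m Θ α) (hα : α ≤ 1)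
    (hαm : α < m) (hc : 0 < c) (hcβ : c < (n - 1) / (m - α)) : UnifOrdApprox m n Θᵀ c := by
  set β : ℝ := (n - 1) / (m - α)
  have hβ : n - m * β = 1 - α * β := by
    have : β * (m - α) = n - 1 := div_mul_cancel₀ _ (sub_pos.2 hαm).ne'
    linarith
  refine h.transpose hd hc hcβ one_pos fun Y hY a ha ha1 => ?_
  have hY0 : 0 < Y := by linarith
  have ha0 : 0 < a := (by positivity : 0 < Y ^ (n - m * β)).trans_le ha
  rw [hβ] at ha ⊢
  constructor
  · calc Y ^ (1 : ℝ) ≤ Y ^ (1 - α * β + β) :=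
          Real.rpow_le_rpow_of_exponent_le hY (by nlinarith)
      _ = Y ^ (1 - α * β) * Y ^ β := Real.rpow_add hY0 _ _
      _ ≤ _ := by gcongr
  · calc Y * (a * Y ^ β) ^ (-α) = a ^ (-α) * Y ^ (1 - α * β) := by
          rw [Real.mul_rpow ha0.le (by positivity), ← Real.rpow_mul hY0.le,
            sub_eq_add_neg, Real.rpow_add hY0, Real.rpow_one]
          ring_nf
      _ ≤ a ^ (-1 : ℝ) * Y ^ (1 - α * β) := by
          gcongr ?_ * _
          exact Real.rpow_le_rpow_of_exponent_ge ha0 ha1 (by linarith)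
      _ = _ := by rw [Real.rpow_neg_one, inv_mul_eq_div]

theorem UnifOrdApprox.transpose_of_one_lt {n m : ℕ} (hd : 3 ≤ m + n) (hm : 2 ≤ m)
    {Θ : Matrix (Fin n) (Fin m) ℝ} {α c : ℝ} (h : UnifOrdApprox n m Θ α) (hα : 1 < α)
    (hc : 0 < c) (hcβ : c < (n - α⁻¹) / (m - 1)) : UnifOrdApprox m n Θᵀ c := by
  set β : ℝ := (n - α⁻¹) / (m - 1)
  have hm' : (2 : ℝ) ≤ m := by exact_mod_cast hm
  have hα0 : 0 < α := by linarith
  have hβ : n - m * β = α⁻¹ - β := by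
    have : β * (m - 1) = n - α⁻¹ := div_mul_cancel₀ _ (by linarith)
    linarith
  refine h.transpose hd hc hcβ (inv_pos.2 hα0) fun Y hY a ha ha1 => ?_
  have hY0 : 0 < Y := by linarith
  have hε0 : 0 < Y ^ (n - m * β) := by positivity
  set ε := Y ^ (n - m * β) with hε
  have hY_split : Y ^ α⁻¹ = ε * Y ^ β := by
    rw [hε, hβ, ← Real.rpow_add hY0, sub_add_cancel]
  have ha0 : 0 < a := hε0.trans_le ha
  constructor
  · rw [hY_split]
    gcongr
  · have hs : a * Y ^ β = (a / ε) * Y ^ α⁻¹ := by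
      rw [hY_split]
      field_simp
    calc Y * (a * Y ^ β) ^ (-α) = (a / ε) ^ (-α) := by
          rw [hs, Real.mul_rpow (by positivity) (by positivity), ← Real.rpow_mul hY0.le,
            mul_neg, inv_mul_cancel₀ hα0.ne', Real.rpow_neg_one]
          field_simp
      _ ≤ (a / ε) ^ (-1 : ℝ) :=
          Real.rpow_le_rpow_of_exponent_le ((one_le_div hε0).2 ha) (by linarith)
      _ = _ := by rw [Real.rpow_neg_one, inv_div]

theorem oalpha_transpose_ge_of_le_one {n m : ℕ} (hn : 0 < n) (hm : 0 < m) (hd : 3 ≤ m + n)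
    (Θ : Matrix (Fin n) (Fin m) ℝ) (h1 : oalpha n m Θ ≤ 1) (h2 : oalpha n m Θ < (m : EReal)) :
    oalpha m n Θᵀ ≥
      ((((n : ℝ) - 1) / ((m : ℝ) - (oalpha n m Θ).toReal) : ℝ) : EReal) := by
  have h0 : (0 : EReal) ≤ oalpha n m Θ := (unifOrdApprox_zero hm Θ).le_oalpha
  obtain ⟨α, hα⟩ : ∃ α : ℝ, oalpha n m Θ = α :=
    ⟨_, (EReal.coe_toReal (ne_top_of_lt h2) (ne_bot_of_gt (EReal.bot_lt_zero.trans_le h0))).symm⟩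
  have hlt : ∀ γ : ℝ, γ < α → UnifOrdApprox n m Θ γ := fun γ hγ =>
    unifOrdApprox_of_lt_oalpha (by rw [hα]; exact EReal.coe_lt_coe_iff.2 hγ)
  rw [hα] at h1 h2 ⊢
  have hα1 : α ≤ 1 := by exact_mod_cast h1
  have hαm : α < m := by
    have : ((m : ℝ) : EReal) = (m : EReal) := EReal.coe_natCast
    rw [← this] at h2
    exact_mod_cast h2
  rw [EReal.toReal_coe]
  refine le_oalpha_of_forall_lt hn fun c hc hcb => ?_
  have hcont : ContinuousAt (fun γ : ℝ => ((n : ℝ) - 1) / (m - γ)) α :=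
    continuousAt_const.div (by fun_prop) (sub_pos.2 hαm).ne'
  obtain ⟨γ, hγ, hγα⟩ := ((hcont.eventually (lt_mem_nhds hcb)).filter_mono
    nhdsWithin_le_nhds |>.and (self_mem_nhdsWithin (s := Set.Iio α))).exists
  exact (hlt γ hγα).transpose_of_le_one hd (hγα.le.trans hα1) (hγα.trans hαm) hc hγ

theorem exists_coe_lt_of_lt_inv_toReal {A : EReal} (hA : 1 < A) {r : ℝ}
    (hr : A.toReal⁻¹ < r) : ∃ γ : ℝ, 1 < γ ∧ (γ : EReal) < A ∧ γ⁻¹ < r := by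
  induction A with
  | bot => simp at hA
  | top =>
    rw [EReal.toReal_top, _root_.inv_zero] at hr
    refine ⟨max 2 (r⁻¹ + 1), by simp, EReal.coe_lt_top _, ?_⟩
    have : r⁻¹ < max 2 (r⁻¹ + 1) := lt_max_of_lt_right (lt_add_one _)
    exact inv_lt_of_inv_lt₀ hr this
  | coe α =>
    rw [EReal.toReal_coe] at hr
    have hα1 : 1 < α := by exact_mod_cast hA
    have hcont : ContinuousAt (fun γ : ℝ => γ⁻¹) α := continuousAt_inv₀ (by linarith)
    obtain ⟨γ, ⟨hγ, hγ1⟩, hγα⟩ := (((hcont.eventually (gt_mem_nhds hr)).and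
      (lt_mem_nhds hα1)).filter_mono nhdsWithin_le_nhds |>.and
      (self_mem_nhdsWithin (s := Set.Iio α))).exists
    exact ⟨γ, hγ1, EReal.coe_lt_coe_iff.2 hγα, hγ⟩

/-- Theorem 4: inequalities between uniform exponents of Θ and ᵗΘ. -/
theorem oalpha_transpose_inequalities (n m : ℕ) (hn : 0 < n) (hm : 0 < m)
    (hnm : ¬(n = 1 ∧ m = 1)) (Θ : Matrix (Fin n) (Fin m) ℝ) :
    (oalpha n m Θ ≤ 1 → oalpha n m Θ < (m : EReal) →
      oalpha m n Θᵀ ≥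
        ((((n : ℝ) - 1) / ((m : ℝ) - (oalpha n m Θ).toReal) : ℝ) : EReal)) ∧
    (1 ≤ oalpha n m Θ → 2 ≤ m →
      oalpha m n Θᵀ ≥
        ((((n : ℝ) - ((oalpha n m Θ).toReal)⁻¹) / ((m : ℝ) - 1) : ℝ) : EReal)) := by
  have hd : 3 ≤ m + n := by omega
  refine ⟨oalpha_transpose_ge_of_le_one hn hm hd Θ, fun h1 h2 => ?_⟩
  have hm' : (2 : ℝ) ≤ m := by exact_mod_cast h2
  rcases h1.eq_or_lt with h1 | h1
  · have hlt : oalpha n m Θ < (m : EReal) := by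
      rw [← h1]
      exact_mod_cast h2
    simpa [← h1] using oalpha_transpose_ge_of_le_one hn hm hd Θ h1.ge hlt
  · refine le_oalpha_of_forall_lt hn fun c hc hcb => ?_
    rw [lt_div_iff₀ (by linarith), lt_sub_comm] at hcb
    obtain ⟨γ, hγ1, hγ, hγr⟩ := exists_coe_lt_of_lt_inv_toReal h1 hcb
    refine (unifOrdApprox_of_lt_oalpha hγ).transpose_of_one_lt hd h2 hγ1 hc ?_
    rwa [lt_div_iff₀ (by linarith), lt_sub_comm]
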